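/- Suppose |q a_1⁻¹⋯a_n⁻¹ b_1⁻¹⋯b_n⁻¹| < |t| < 1 and that x_i b_j ∉ qᶻ for all 1 ≤ i, j ≤ n. Then the series defining I(t;x) converges absolutely and I(t;x) = (1−q)ⁿ (q)_∞ⁿ ∏_{i=1}^n ∏_{j=1}^n (q a_i⁻¹ b_j⁻¹)_∞ / [ (t)_∞ · (q t⁻¹ a_1⁻¹⋯a_n⁻¹ b_1⁻¹⋯b_n⁻¹)_∞ ] · θ(t x_1⋯x_n b_1⋯b_n) / ∏_{i=1}^n ∏_{j=1}^n θ(x_i b_j) · ∏_{1≤i<j≤n} x_j θ(x_i/x_j). (Milne–Gustafson summation formula.) -/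

import Mathlib

/-!
Put `c j = (a j)⁻¹`. Expanding the Vandermonde factor turns the Jackson integral into the
determinant of the moments `∑ y ^ k Φ(y)`, `k < n`, of a one-variable weight `Φ` over the lattices
`x i q^ℤ`.

Since `Φ(q y) ∏ (1 - q c j y)` equals `Φ(y) ∏ (1 - b j y)` and a moment over `x i q^ℤ` is a
bilateral sum, shifting the summation index gives a linear relation between the moments of order
`0, …, n` whose coefficients do not depend on `i`. As the factor `y` in a moment amounts to
`t ↦ q t`, Cramer's rule makes this a first order `q`-difference equation in `t` for the
determinant.

If `c j = (x j)⁻¹` for all `j`, then `Φ` vanishes at the lattice points with negative exponent, so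
the determinant has an evident limit under iteration of `t ↦ q t`, and the difference equation
gives the formula. Replacing `x k` by `q x k` multiplies both sides by `t⁻¹`, which extends it to
`c j = q ^ m j (x j)⁻¹` with `m j ∈ ℕ`. These points accumulate at `0` in each coordinate and both
sides are holomorphic in every `c j`, so, as in Ismail's proof of Ramanujan's `₁ψ₁` summation, the
formula holds throughout the domain `|q ∏ c j| < |t ∏ b j|`.
-/

open scoped BigOperators
open Finset

/-- The infinite q-Pochhammer symbol `(a)_∞ = ∏_{i=0}^∞ (1 - qⁱ a)`. -/
noncomputable def qp (q a : ℂ) : ℂ := ∏' i : ℕ, (1 - q ^ i * a)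

/-- The theta function `θ(a) = (a)_∞ (q/a)_∞`. -/
noncomputable def th (q a : ℂ) : ℂ := qp q a * qp q (q / a)

/-- Summand of the normalized Jackson integral of Milne–Gustafson type. -/
noncomputable def mgTerm {n : ℕ} (q t : ℂ) (a b x : Fin n → ℂ) (ν : Fin n → ℤ) : ℂ :=
  t ^ (∑ i, ν i) *
    (∏ i, ∏ j, qp q (q * (a j)⁻¹ * (x i * q ^ ν i)) / qp q (b j * (x i * q ^ ν i))) *
    ∏ i, ∏ j ∈ Finset.Ioi i, (x j * q ^ ν j - x i * q ^ ν i)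

/-- The normalized Jackson integral of Milne–Gustafson type `I(t;x)`. -/
noncomputable def mgSum {n : ℕ} (q t : ℂ) (a b x : Fin n → ℂ) : ℂ :=
  (1 - q) ^ n * ∑' ν : Fin n → ℤ, mgTerm q t a b x ν

section QPochhammer

open Filter Topology

variable {q : ℂ}

lemma summable_norm_neg_pow_mul (hq : ‖q‖ < 1) (z : ℂ) : Summable fun i : ℕ => ‖-(q ^ i * z)‖ := by
  simp only [norm_neg, norm_mul, norm_pow]
  exact (summable_geometric_of_lt_one (norm_nonneg _) hq).mul_right _

lemma multipliable_qp (hq : ‖q‖ < 1) (z : ℂ) : Multipliable fun i : ℕ => 1 - q ^ i * z := by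
  simpa only [sub_eq_add_neg] using
    multipliable_one_add_of_summable (summable_norm_neg_pow_mul hq z)

lemma qp_zero : qp q 0 = 1 := by simp [qp]

lemma qp_eq_one_sub_mul (hq : ‖q‖ < 1) (z : ℂ) : qp q z = (1 - z) * qp q (q * z) := by
  have h := tprod_eq_zero_mul' (f := fun i : ℕ => 1 - q ^ i * z)
    (by simpa only [pow_succ, mul_assoc] using multipliable_qp hq (q * z))
  simpa only [qp, pow_succ, mul_assoc, pow_zero, one_mul] using h

lemma qp_ne_zero (hq : ‖q‖ < 1) {z : ℂ} (hz : ∀ i : ℕ, q ^ i * z ≠ 1) : qp q z ≠ 0 := by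
  have := tprod_one_add_ne_zero_of_summable (f := fun i : ℕ => -(q ^ i * z))
    (fun i h => hz i (by linear_combination -h)) (summable_norm_neg_pow_mul hq z)
  simpa only [qp, sub_eq_add_neg] using this

lemma qp_ne_zero_of_norm_lt_one (hq : ‖q‖ < 1) {z : ℂ} (hz : ‖z‖ < 1) : qp q z ≠ 0 := by
  refine qp_ne_zero hq fun i h => ?_
  have hlt : ‖q ^ i * z‖ < 1 := by
    rw [norm_mul, norm_pow]
    exact mul_lt_one_of_nonneg_of_lt_one_right (pow_le_one₀ (norm_nonneg _) hq.le)
      (norm_nonneg _) hz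
  simp [h] at hlt

lemma qp_eq_zero {z : ℂ} {i : ℕ} (hz : q ^ i * z = 1) : qp q z = 0 :=
  tprod_of_exists_eq_zero ⟨i, by rw [hz, sub_self]⟩

lemma differentiable_qp (hq : ‖q‖ < 1) : Differentiable ℂ (qp q) := by
  intro z
  have hU : IsOpen (Metric.ball (0 : ℂ) (‖z‖ + 1)) := Metric.isOpen_ball
  have hprod := Summable.hasProdLocallyUniformlyOn_nat_one_add
    (f := fun (i : ℕ) (w : ℂ) => -(q ^ i * w)) hU
    ((summable_geometric_of_lt_one (norm_nonneg _) hq).mul_right (‖z‖ + 1))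
    (Eventually.of_forall fun i w hw => by
      rw [norm_neg, norm_mul, norm_pow]
      have : ‖w‖ < ‖z‖ + 1 := by simpa using hw
      gcongr) (fun i => by fun_prop)
  have hdiff : DifferentiableOn ℂ (qp q) (Metric.ball 0 (‖z‖ + 1)) :=
    (hprod.differentiableOn (Eventually.of_forall fun s => by fun_prop) hU).congr
      fun w _ => by simp only [qp, sub_eq_add_neg]
  exact hdiff.differentiableAt (hU.mem_nhds (by simp))

lemma norm_qp_le (hq : ‖q‖ < 1) {z : ℂ} {r : ℝ} (hz : ‖z‖ ≤ r) :
    ‖qp q z‖ ≤ ‖qp (‖q‖ : ℂ) (-(r : ℂ))‖ := by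
  have hq' : ‖(‖q‖ : ℂ)‖ < 1 := by simpa using hq
  have hr : 0 ≤ r := (norm_nonneg z).trans hz
  rw [qp, qp, (multipliable_qp hq z).norm_tprod, (multipliable_qp hq' _).norm_tprod]
  refine le_of_tendsto_of_tendsto' (multipliable_qp hq z).norm.hasProd.tendsto_prod_nat
    (multipliable_qp hq' _).norm.hasProd.tendsto_prod_nat fun N => ?_
  refine prod_le_prod (fun i _ => norm_nonneg _) fun i _ => ?_
  calc ‖1 - q ^ i * z‖ ≤ 1 + ‖q‖ ^ i * r := by
        refine (norm_sub_le _ _).trans ?_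
        rw [norm_one, norm_mul, norm_pow]
        gcongr
    _ = ‖((1 + ‖q‖ ^ i * r : ℝ) : ℂ)‖ := by
        rw [Complex.norm_real, Real.norm_of_nonneg (by positivity)]
    _ = ‖1 - (‖q‖ : ℂ) ^ i * -(r : ℂ)‖ := by push_cast; ring_nf

lemma tendsto_qp_pow_mul (hq : ‖q‖ < 1) (z : ℂ) :
    Tendsto (fun k : ℕ => qp q (q ^ k * z)) atTop (𝓝 1) := by
  have h : Tendsto (fun k : ℕ => q ^ k * z) atTop (𝓝 0) := by
    simpa using (tendsto_pow_atTop_nhds_zero_of_norm_lt_one hq).mul_const z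
  exact qp_zero (q := q) ▸ ((differentiable_qp hq).continuous.tendsto 0).comp h

lemma eq_qp_mul_of_tendsto (hq : ‖q‖ < 1) {z L : ℂ} {u : ℕ → ℂ}
    (hu : ∀ k, u k = (1 - q ^ k * z) * u (k + 1)) (hL : Tendsto u atTop (𝓝 L)) :
    u 0 = qp q z * L := by
  have hpartial (k : ℕ) : (∏ i ∈ range k, (1 - q ^ i * z)) * u k = u 0 := by
    induction k with
    | zero => simp
    | succ k ih => rw [prod_range_succ, mul_assoc, ← hu, ih]
  refine tendsto_nhds_unique ?_ ((multipliable_qp hq z).hasProd.tendsto_prod_nat.mul hL)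
  simp only [hpartial, tendsto_const_nhds]

lemma qp_mul_zpow_ne_zero (hq0 : q ≠ 0) (hq : ‖q‖ < 1) {z : ℂ} (hz : ∀ m : ℤ, z ≠ q ^ m) (m : ℤ) :
    qp q (z * q ^ m) ≠ 0 := by
  refine qp_ne_zero hq fun i hi => hz (-(i + m)) ?_
  rw [zpow_neg, zpow_add₀ hq0, zpow_natCast]
  exact eq_inv_of_mul_eq_one_left (by linear_combination hi)

lemma th_mul_q (hq0 : q ≠ 0) (hq : ‖q‖ < 1) {z : ℂ} (hz : z ≠ 0) :
    th q (q * z) = -z⁻¹ * th q z := by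
  rw [th, th, qp_eq_one_sub_mul hq z, show q / (q * z) = z⁻¹ by field_simp,
    qp_eq_one_sub_mul hq z⁻¹, ← div_eq_mul_inv q z]
  field_simp
  ring

lemma th_ne_zero (hq0 : q ≠ 0) (hq : ‖q‖ < 1) {z : ℂ} (hz : ∀ m : ℤ, z ≠ q ^ m) : th q z ≠ 0 := by
  have hleft : qp q z ≠ 0 := by simpa using qp_mul_zpow_ne_zero hq0 hq hz 0
  refine mul_ne_zero hleft (qp_ne_zero hq fun i hi => hz (i + 1) ?_)
  have hz0 : z ≠ 0 := fun h => by simp [h] at hi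
  rw [zpow_add_one₀ hq0, zpow_natCast]
  field_simp at hi
  exact hi.symm

end QPochhammer

section BilateralSeries

open Filter Topology

lemma summable_of_tendsto_norm_ratio_lt_one {f r : ℕ → ℂ} {l : ℝ} (hl : l < 1)
    (hf : ∀ᶠ k in atTop, f (k + 1) = r k * f k) (hr : Tendsto (fun k => ‖r k‖) atTop (𝓝 l)) :
    Summable f := by
  obtain ⟨ρ, hlρ, hρ⟩ := exists_between hl
  refine summable_of_ratio_norm_eventually_le hρ ?_
  filter_upwards [hf, hr.eventually_le_const hlρ] with k hk hrk
  rw [hk, norm_mul]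
  gcongr

variable {ι : Type*} [Fintype ι]

/-- Summand of the bilateral series `∑ m, s ^ m ∏ j, (α j pᵐ)_∞ / (β j qᵐ)_∞`, a multiple of the
basic series `ₙψₙ` when `p = q`. The base `p` of the numerators is kept apart so that `p = |q|`
provides majorants. -/
noncomputable def psiTerm (p q s : ℂ) (α β : ι → ℂ) (m : ℤ) : ℂ :=
  s ^ m * ∏ j, qp p (α j * p ^ m) / qp q (β j * q ^ m)

variable {p q s : ℂ} {α β : ι → ℂ}

lemma one_sub_mul_zpow_ne_zero {z : ℂ} (hz : ∀ m : ℤ, z ≠ q ^ m) (m : ℤ) :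
    1 - z * q ^ m ≠ 0 := fun h => by
  refine hz (-m) ?_
  rw [zpow_neg]
  exact eq_inv_of_mul_eq_one_left (by linear_combination -h)

lemma psiTerm_add_one_mul (hp0 : p ≠ 0) (hp : ‖p‖ < 1) (hq0 : q ≠ 0) (hq : ‖q‖ < 1) (hs : s ≠ 0)
    (hβ : ∀ j, ∀ m : ℤ, β j ≠ q ^ m) (m : ℤ) :
    psiTerm p q s α β (m + 1) * ∏ j, (1 - α j * p ^ m) =
      s * (∏ j, (1 - β j * q ^ m)) * psiTerm p q s α β m := by
  have hfactor (j : ι) : qp p (α j * p ^ (m + 1)) / qp q (β j * q ^ (m + 1)) * (1 - α j * p ^ m) =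
      (1 - β j * q ^ m) * (qp p (α j * p ^ m) / qp q (β j * q ^ m)) := by
    rw [qp_eq_one_sub_mul hp (α j * p ^ m), qp_eq_one_sub_mul hq (β j * q ^ m),
      show p * (α j * p ^ m) = α j * p ^ (m + 1) by rw [zpow_add_one₀ hp0]; ring,
      show q * (β j * q ^ m) = β j * q ^ (m + 1) by rw [zpow_add_one₀ hq0]; ring]
    have := one_sub_mul_zpow_ne_zero (hβ j) m
    field_simp
  calc psiTerm p q s α β (m + 1) * ∏ j, (1 - α j * p ^ m)
      = s ^ (m + 1) * ∏ j, (qp p (α j * p ^ (m + 1)) / qp q (β j * q ^ (m + 1)) *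
          (1 - α j * p ^ m)) := by rw [psiTerm, mul_assoc, ← prod_mul_distrib]
    _ = s * (∏ j, (1 - β j * q ^ m)) * psiTerm p q s α β m := by
        rw [prod_congr rfl fun j _ => hfactor j, prod_mul_distrib, psiTerm, zpow_add_one₀ hs]
        ring

lemma summable_psiTerm_nat (hp0 : p ≠ 0) (hp : ‖p‖ < 1) (hq0 : q ≠ 0) (hq : ‖q‖ < 1) (hs0 : s ≠ 0)
    (hs : ‖s‖ < 1) (hβ : ∀ j, ∀ m : ℤ, β j ≠ q ^ m) :
    Summable fun k : ℕ => psiTerm p q s α β k := by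
  have hone (r z : ℂ) (hr : ‖r‖ < 1) : Tendsto (fun k : ℕ => 1 - z * r ^ k) atTop (𝓝 1) := by
    simpa using ((tendsto_pow_atTop_nhds_zero_of_norm_lt_one hr).const_mul z).const_sub 1
  have hden : Tendsto (fun k : ℕ => ∏ j, (1 - α j * p ^ k)) atTop (𝓝 1) := by
    simpa using tendsto_finsetProd univ fun j _ => hone p (α j) hp
  have hnum : Tendsto (fun k : ℕ => ∏ j, (1 - β j * q ^ k)) atTop (𝓝 1) := by
    simpa using tendsto_finsetProd univ fun j _ => hone q (β j) hq
  have hratio := (((hnum.const_mul s).div hden one_ne_zero)).norm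
  refine summable_of_tendsto_norm_ratio_lt_one (by simpa using hs) ?_ hratio
  filter_upwards [hden.eventually_ne one_ne_zero] with k hk
  have := psiTerm_add_one_mul (α := α) hp0 hp hq0 hq hs0 hβ k
  simp only [zpow_natCast] at this
  simp only [Nat.cast_add, Nat.cast_one, Pi.div_apply]
  rw [div_mul_eq_mul_div, eq_div_iff hk, this]

lemma summable_psiTerm_neg_nat (hp0 : p ≠ 0) (hpq : ‖p‖ = ‖q‖) (hq : ‖q‖ < 1) (hs0 : s ≠ 0)
    (hβ : ∀ j, ∀ m : ℤ, β j ≠ q ^ m)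
    (hαβ : ∏ j, ‖α j‖ < ‖s‖ * ∏ j, ‖β j‖) :
    Summable fun k : ℕ => psiTerm p q s α β (-k) := by
  have hp : ‖p‖ < 1 := hpq ▸ hq
  have hq0 : q ≠ 0 := norm_ne_zero_iff.1 (hpq ▸ norm_ne_zero_iff.2 hp0)
  have hlim (r z : ℂ) (hr : ‖r‖ < 1) : Tendsto (fun k : ℕ => ‖r ^ (k + 1) - z‖) atTop (𝓝 ‖z‖) := by
    simpa using (((tendsto_add_atTop_iff_nat 1).2
      (tendsto_pow_atTop_nhds_zero_of_norm_lt_one hr)).sub_const z).norm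
  have hsβ : 0 < ‖s‖ * ∏ j, ‖β j‖ :=
    (prod_nonneg fun j _ => norm_nonneg _).trans_lt hαβ
  have hratio := (tendsto_finsetProd univ fun j _ => hlim p (α j) hp).div
    ((tendsto_finsetProd univ fun j _ => hlim q (β j) hq).const_mul ‖s‖) hsβ.ne'
  have hnorm (r z : ℂ) (hr : r ≠ 0) (k : ℕ) :
      ‖1 - z * r ^ (-(k + 1 : ℤ))‖ = ‖r ^ (k + 1) - z‖ / ‖r‖ ^ (k + 1) := by
    rw [← norm_pow, ← norm_div, ← Nat.cast_add_one, zpow_neg, zpow_natCast]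
    field_simp
  refine summable_of_tendsto_norm_ratio_lt_one ((div_lt_one hsβ).2 hαβ) (r := fun k =>
    (∏ j, (1 - α j * p ^ (-(k + 1 : ℤ)))) / (s * ∏ j, (1 - β j * q ^ (-(k + 1 : ℤ)))))
    (Eventually.of_forall fun k => ?_) (hratio.congr fun k => ?_)
  · have hne : s * ∏ j, (1 - β j * q ^ (-(k + 1 : ℤ))) ≠ 0 :=
      mul_ne_zero hs0 (prod_ne_zero_iff.2 fun j _ => one_sub_mul_zpow_ne_zero (hβ j) _)
    have := psiTerm_add_one_mul (α := α) hp0 hp hq0 hq hs0 hβ (-(k + 1 : ℤ))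
    rw [neg_add, neg_add_cancel_right, ← neg_add] at this
    rw [div_mul_eq_mul_div, eq_div_iff hne, Nat.cast_add_one, mul_comm, ← this, mul_comm]
  · have : ‖q‖ ≠ 0 := norm_ne_zero_iff.2 hq0
    simp only [Pi.div_apply, norm_div, norm_mul, norm_prod, hnorm p _ hp0, hnorm q _ hq0,
      prod_div_distrib, hpq, prod_const]
    field_simp

lemma summable_psiTerm (hp0 : p ≠ 0) (hpq : ‖p‖ = ‖q‖) (hq : ‖q‖ < 1) (hs0 : s ≠ 0) (hs : ‖s‖ < 1)
    (hβ : ∀ j, ∀ m : ℤ, β j ≠ q ^ m)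
    (hαβ : ∏ j, ‖α j‖ < ‖s‖ * ∏ j, ‖β j‖) : Summable (psiTerm p q s α β) :=
  have hq0 : q ≠ 0 := norm_ne_zero_iff.1 (hpq ▸ norm_ne_zero_iff.2 hp0)
  .of_nat_of_neg (summable_psiTerm_nat hp0 (hpq ▸ hq) hq0 hq hs0 hs hβ)
    (summable_psiTerm_neg_nat hp0 hpq hq hs0 hβ hαβ)

end BilateralSeries

section Moments

open Filter Topology

variable {ι : Type*} [Fintype ι]

/-- The one-variable weight `Φ(y) = ∏ j, (q c j y)_∞ / (b j y)_∞` of the Jackson integral, where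
`c j` stands for `(a j)⁻¹`. -/
noncomputable def mgWeight (q : ℂ) (c b : ι → ℂ) (y : ℂ) : ℂ :=
  ∏ j, qp q (q * c j * y) / qp q (b j * y)

/-- Summand of the one-variable Jackson integral of `y ^ k` against the weight `mgWeight`, over the
lattice `x q^ℤ`. -/
noncomputable def momentTerm (q t : ℂ) (c b : ι → ℂ) (x : ℂ) (k : ℕ) (m : ℤ) : ℂ :=
  t ^ m * mgWeight q c b (x * q ^ m) * (x * q ^ m) ^ k

/-- The `k`-th moment of the weight `mgWeight` over the lattice `x q^ℤ`, whose point `x q ^ m`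
carries the mass `t ^ m`. -/
noncomputable def moment (q t : ℂ) (c b : ι → ℂ) (x : ℂ) (k : ℕ) : ℂ :=
  ∑' m : ℤ, momentTerm q t c b x k m

variable {q t : ℂ} {b c : ι → ℂ} {x : ℂ}

lemma momentTerm_eq_psiTerm (c b : ι → ℂ) (x : ℂ) (k : ℕ) (m : ℤ) :
    momentTerm q t c b x k m =
      x ^ k * psiTerm q q (q ^ k * t) (fun j => q * c j * x) (fun j => b j * x) m := by
  have hpow : (q ^ k * t) ^ m = (q ^ m) ^ k * t ^ m := by
    rw [mul_zpow, ← zpow_natCast q k, ← zpow_natCast (q ^ m) k, zpow_comm]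
  simp only [momentTerm, mgWeight, psiTerm, hpow, mul_pow, mul_assoc]
  ring

lemma norm_pow_mul_lt_one (hq : ‖q‖ < 1) (ht : ‖t‖ < 1) (k : ℕ) : ‖q ^ k * t‖ < 1 := by
  rw [norm_mul, norm_pow]
  exact mul_lt_one_of_nonneg_of_lt_one_right (pow_le_one₀ (norm_nonneg q) hq.le) (norm_nonneg t) ht

lemma norm_momentTerm_le (hq : ‖q‖ < 1) {M : ι → ℝ} (hc : ∀ j, ‖c j‖ ≤ M j) (k : ℕ) (m : ℤ) :
    ‖momentTerm q t c b x k m‖ ≤ ‖x ^ k * psiTerm ‖q‖ q (q ^ k * t)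
      (fun j => -((‖q‖ * M j * ‖x‖ : ℝ) : ℂ)) (fun j => b j * x) m‖ := by
  rw [momentTerm_eq_psiTerm, norm_mul, norm_mul, psiTerm, psiTerm, norm_mul, norm_mul, norm_prod,
    norm_prod]
  gcongr with j
  rw [norm_div, norm_div]
  gcongr
  refine (norm_qp_le hq (r := ‖q‖ * M j * ‖x‖ * ‖q‖ ^ m) ?_).trans_eq (by push_cast; ring_nf)
  rw [norm_mul, norm_mul, norm_mul, norm_zpow]
  gcongr
  exact hc j

lemma summable_momentTerm_majorant (hq0 : q ≠ 0) (hq : ‖q‖ < 1) (ht0 : t ≠ 0) (ht : ‖t‖ < 1)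
    (hx : x ≠ 0) (hxb : ∀ j, ∀ m : ℤ, b j * x ≠ q ^ m) {M : ι → ℝ} (hM : ∀ j, 0 ≤ M j)
    (hlow : ‖q‖ * ∏ j, M j < ‖t‖ * ∏ j, ‖b j‖) {k : ℕ} (hk : k < Fintype.card ι) :
    Summable fun m : ℤ => ‖x ^ k * psiTerm ‖q‖ q (q ^ k * t)
      (fun j => -((‖q‖ * M j * ‖x‖ : ℝ) : ℂ)) (fun j => b j * x) m‖ := by
  have hQ : 0 < ‖q‖ := norm_pos_iff.2 hq0
  have : 0 < ‖x‖ := norm_pos_iff.2 hx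
  refine ((summable_psiTerm (by exact_mod_cast hQ.ne') (by simp) hq
    (mul_ne_zero (pow_ne_zero k hq0) ht0) (norm_pow_mul_lt_one hq ht k) hxb ?_).mul_left _).norm
  obtain ⟨d, hd⟩ : ∃ d, Fintype.card ι = k + 1 + d := ⟨_, (Nat.add_sub_of_le hk).symm⟩
  have hprod : 0 ≤ ∏ j, M j := prod_nonneg fun j _ => hM j
  calc ∏ j, ‖-((‖q‖ * M j * ‖x‖ : ℝ) : ℂ)‖
      = ‖q‖ ^ d * (‖q‖ * ∏ j, M j) * (‖q‖ ^ k * ‖x‖ ^ Fintype.card ι) := by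
        have hnorm (j : ι) : ‖-((‖q‖ * M j * ‖x‖ : ℝ) : ℂ)‖ = ‖q‖ * M j * ‖x‖ := by
          rw [norm_neg, Complex.norm_real, Real.norm_of_nonneg (by have := hM j; positivity)]
        simp only [hnorm, prod_mul_distrib, prod_const, card_univ, hd]
        ring
    _ ≤ 1 * (‖q‖ * ∏ j, M j) * (‖q‖ ^ k * ‖x‖ ^ Fintype.card ι) := by
        gcongr
        exact pow_le_one₀ hQ.le hq.le
    _ < ‖t‖ * (∏ j, ‖b j‖) * (‖q‖ ^ k * ‖x‖ ^ Fintype.card ι) := by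
        rw [one_mul]
        gcongr
    _ = ‖q ^ k * t‖ * ∏ j, ‖b j * x‖ := by
        simp only [norm_mul, norm_pow, prod_mul_distrib, prod_const, card_univ]
        ring

lemma summable_norm_momentTerm (hq0 : q ≠ 0) (hq : ‖q‖ < 1) (ht0 : t ≠ 0) (ht : ‖t‖ < 1)
    (hx : x ≠ 0) (hxb : ∀ j, ∀ m : ℤ, b j * x ≠ q ^ m)
    (hlow : ‖q‖ * ∏ j, ‖c j‖ < ‖t‖ * ∏ j, ‖b j‖) {k : ℕ} (hk : k < Fintype.card ι) :
    Summable fun m => ‖momentTerm q t c b x k m‖ :=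
  .of_nonneg_of_le (fun _ => norm_nonneg _) (norm_momentTerm_le hq (fun _ => le_rfl) k)
    (summable_momentTerm_majorant hq0 hq ht0 ht hx hxb (fun _ => norm_nonneg _) hlow hk)

lemma exists_pos_mul_prod_add_lt {α : ι → ℝ} {r s : ℝ} (h : r * ∏ j, α j < s) :
    ∃ ε > 0, r * ∏ j, (α j + ε) < s := by
  have hcont : Continuous fun ε : ℝ => r * ∏ j, (α j + ε) := by fun_prop
  have hnear : ∀ᶠ ε in 𝓝 0, r * ∏ j, (α j + ε) < s :=
    (hcont.tendsto 0).eventually_lt_const (by simpa using h)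
  obtain ⟨ε, hlt, hpos⟩ :=
    ((hnear.filter_mono nhdsWithin_le_nhds).and (self_mem_nhdsWithin (s := Set.Ioi 0))).exists
  exact ⟨ε, hpos, hlt⟩

lemma differentiable_update_apply {α : Type*} [DecidableEq α] (c : α → ℂ) (l j : α) :
    Differentiable ℂ fun z => Function.update c l z j := by
  rcases eq_or_ne j l with rfl | hjl
  · simp only [Function.update_self, differentiable_fun_id]
  · simp only [Function.update_of_ne hjl, differentiable_const]

lemma differentiable_momentTerm_update [DecidableEq ι] (hq : ‖q‖ < 1) (c b : ι → ℂ) (x : ℂ) (k : ℕ)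
    (m : ℤ) (l : ι) :
    Differentiable ℂ fun z => momentTerm q t (Function.update c l z) b x k m := by
  have hfactor (j : ι) : Differentiable ℂ fun z =>
      qp q (q * Function.update c l z j * (x * q ^ m)) / qp q (b j * (x * q ^ m)) :=
    ((differentiable_qp hq).comp
      (((differentiable_update_apply c l j).const_mul q).mul_const _)).div_const _
  unfold momentTerm mgWeight
  exact ((Differentiable.fun_finsetProd fun j _ => hfactor j).const_mul _).mul_const _

lemma differentiableAt_moment_update [DecidableEq ι] (hq0 : q ≠ 0) (hq : ‖q‖ < 1) (ht0 : t ≠ 0)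
    (ht : ‖t‖ < 1) (hx : x ≠ 0) (hxb : ∀ j, ∀ m : ℤ, b j * x ≠ q ^ m)
    (hlow : ‖q‖ * ∏ j, ‖c j‖ < ‖t‖ * ∏ j, ‖b j‖) {k : ℕ} (hk : k < Fintype.card ι) (l : ι) :
    DifferentiableAt ℂ (fun z => moment q t (Function.update c l z) b x k) (c l) := by
  obtain ⟨ε, hε, hlowε⟩ := exists_pos_mul_prod_add_lt hlow
  have hM (z : ℂ) (hz : z ∈ Metric.ball (c l) ε) (j : ι) :
      ‖Function.update c l z j‖ ≤ ‖c j‖ + ε := by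
    rcases eq_or_ne j l with rfl | hjl
    · rw [Function.update_self]
      linarith [norm_le_norm_add_norm_sub' z (c j), mem_ball_iff_norm.1 hz]
    · rw [Function.update_of_ne hjl]
      linarith
  exact (Complex.differentiableOn_tsum_of_summable_norm
    (summable_momentTerm_majorant hq0 hq ht0 ht hx hxb (fun j => by positivity) hlowε hk)
    (fun m => (differentiable_momentTerm_update hq c b x k m l).differentiableOn)
    Metric.isOpen_ball fun m z hz => norm_momentTerm_le hq (hM z hz) k m).differentiableAt
    (Metric.ball_mem_nhds _ hε)

end Moments

section SumOfDeterminants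

variable {R β : Type*} [NormedCommRing R]

lemma summable_norm_pi_prod {n : ℕ} {f : Fin n → β → R} (hf : ∀ i, Summable fun m => ‖f i m‖) :
    Summable fun ν : Fin n → β => ‖∏ i, f i (ν i)‖ := by
  induction n with
  | zero => exact (hasSum_fintype _).summable
  | succ n ih =>
    rw [← (Fin.consEquiv fun _ => β).summable_iff]
    refine ((hf 0).mul_norm (ih fun i => hf i.succ)).congr fun ν => ?_
    simp [Fin.prod_univ_succ, Fin.consEquiv]

variable [CompleteSpace R]

lemma hasSum_pi_prod {n : ℕ} {f : Fin n → β → R} (hf : ∀ i, Summable fun m => ‖f i m‖) :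
    HasSum (fun ν : Fin n → β => ∏ i, f i (ν i)) (∏ i, ∑' m, f i m) := by
  refine (summable_norm_pi_prod hf).of_norm.hasSum_iff.2 ?_
  induction n with
  | zero => simp [tsum_fintype]
  | succ n ih =>
    rw [← (Fin.consEquiv fun _ => β).tsum_eq, Fin.prod_univ_succ, ← ih fun i => hf i.succ,
      tsum_mul_tsum_of_summable_norm (hf 0) (summable_norm_pi_prod fun i => hf i.succ)]
    simp [Fin.prod_univ_succ, Fin.consEquiv]

lemma hasSum_det {n : ℕ} {A : Fin n → Fin n → β → R} (hA : ∀ i k, Summable fun m => ‖A i k m‖) :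
    HasSum (fun ν : Fin n → β => (Matrix.of fun i k => A i k (ν i)).det)
      (Matrix.of fun i k => ∑' m, A i k m).det := by
  simp only [← Matrix.det_transpose (Matrix.of _), Matrix.det_apply', Matrix.transpose_apply,
    Matrix.of_apply]
  exact hasSum_sum fun σ _ => (hasSum_pi_prod fun i => hA i (σ i)).mul_left _

end SumOfDeterminants

section DeterminantRelation

open Matrix

variable {K : Type*} [CommRing K] [IsDomain K]

lemma last_mul_det_submatrix_succ {n : ℕ} {A : Matrix (Fin n) (Fin (n + 1)) K}
    {r : Fin (n + 1) → K} (hr : A *ᵥ r = 0) :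
    r (Fin.last n) * (A.submatrix id Fin.succ).det =
      (-1) ^ n * r 0 * (A.submatrix id Fin.castSucc).det := by
  rcases eq_or_ne r 0 with rfl | hr0
  · simp
  -- `A` bordered by a row orthogonal to `r` is singular.
  let top : Fin (n + 1) → K := Pi.single 0 (r (Fin.last n)) - Pi.single (Fin.last n) (r 0)
  let B : Matrix (Fin (n + 1)) (Fin (n + 1)) K := .of (Fin.cons top A)
  have hB : B *ᵥ r = 0 := by
    funext i
    refine Fin.cases ?_ (congrFun hr) i
    change top ⬝ᵥ r = 0
    simp [top, sub_dotProduct, mul_comm]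
  have hdet : B.det = 0 := exists_mulVec_eq_zero_iff.1 ⟨r, hr0, hB⟩
  have hexpand : B.det = r (Fin.last n) * (A.submatrix id Fin.succ).det -
      (-1) ^ n * r 0 * (A.submatrix id Fin.castSucc).det := by
    have hminor (j : Fin (n + 1)) :
        B.submatrix Fin.succ j.succAbove = A.submatrix id j.succAbove := rfl
    have hrow (j : Fin (n + 1)) : B 0 j = top j := rfl
    simp only [det_succ_row_zero, hminor, hrow]
    simp [top, mul_sub, sub_mul, sum_sub_distrib, Pi.single_apply]
  exact sub_eq_zero.1 (hexpand.symm.trans hdet)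

end DeterminantRelation

section QDifferenceEquation

open Polynomial

variable {ι : Type*} [Fintype ι] {q t : ℂ} {b c : ι → ℂ} {x : ℂ}

lemma mgWeight_mul_prod (hq : ‖q‖ < 1) (c : ι → ℂ) {y : ℂ} (hy : ∀ j, 1 - b j * y ≠ 0) :
    mgWeight q c b (q * y) * ∏ j, (1 - c j * (q * y)) = mgWeight q c b y * ∏ j, (1 - b j * y) := by
  rw [mgWeight, mgWeight, ← prod_mul_distrib, ← prod_mul_distrib]
  refine prod_congr rfl fun j _ => ?_
  rw [qp_eq_one_sub_mul hq (q * c j * y), qp_eq_one_sub_mul hq (b j * y),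
    show q * (q * c j * y) = q * c j * (q * y) by ring,
    show q * (b j * y) = b j * (q * y) by ring]
  rw [div_mul_eq_mul_div, div_mul_eq_mul_div, mul_comm (1 - b j * y), mul_div_mul_right _ _ (hy j)]
  ring

lemma hasSum_mgWeight_mul_eval {N : ℕ} {p : ℂ[X]} (hp : p.natDegree < N)
    (hsum : ∀ k < N, Summable (momentTerm q t c b x k)) :
    HasSum (fun m : ℤ => t ^ m * mgWeight q c b (x * q ^ m) * p.eval (x * q ^ m))
      (∑ k ∈ range N, p.coeff k * moment q t c b x k) := by
  have h := hasSum_sum fun k hk => (hsum k (mem_range.1 hk)).hasSum.mul_left (p.coeff k)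
  refine h.congr_fun fun m => ?_
  rw [eval_eq_sum_range' hp, mul_sum]
  exact sum_congr rfl fun k _ => by rw [momentTerm]; ring

/-- The polynomial `∏ j, (1 - z j X)`. -/
noncomputable def prodOneSub (z : ι → ℂ) : ℂ[X] := ∏ j, (1 - C (z j) * X)

lemma natDegree_one_sub_C_mul_X_le (z : ℂ) : (1 - C z * X).natDegree ≤ 1 := by compute_degree

lemma natDegree_prodOneSub_lt (z : ι → ℂ) : (prodOneSub z).natDegree < Fintype.card ι + 1 := by
  refine Nat.lt_succ_of_le ((natDegree_prod_le _ _).trans ?_)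
  simpa using sum_le_sum fun j (_ : j ∈ univ) => natDegree_one_sub_C_mul_X_le (z j)

lemma eval_prodOneSub (z : ι → ℂ) (y : ℂ) : (prodOneSub z).eval y = ∏ j, (1 - z j * y) := by
  simp [prodOneSub, eval_prod]

lemma coeff_zero_prodOneSub (z : ι → ℂ) : (prodOneSub z).coeff 0 = 1 := by
  simp [prodOneSub, coeff_zero_prod]

lemma coeff_card_prodOneSub (z : ι → ℂ) :
    (prodOneSub z).coeff (Fintype.card ι) = (-1) ^ Fintype.card ι * ∏ j, z j := by
  have h := coeff_prod_of_natDegree_le (s := univ) (fun j => 1 - C (z j) * X) 1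
    fun j _ => natDegree_one_sub_C_mul_X_le (z j)
  rw [mul_one] at h
  rw [prodOneSub, ← card_univ, h]
  simp [prod_neg, coeff_one]

lemma sum_coeff_sub_mul_moment_eq_zero (hq0 : q ≠ 0) (hq : ‖q‖ < 1) (ht0 : t ≠ 0)
    (hxb : ∀ j, ∀ m : ℤ, b j * x ≠ q ^ m)
    (hsum : ∀ k < Fintype.card ι + 1, Summable (momentTerm q t c b x k)) :
    ∑ k ∈ range (Fintype.card ι + 1),
      ((prodOneSub c).coeff k - t * (prodOneSub b).coeff k) * moment q t c b x k = 0 := by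
  have hc := hasSum_mgWeight_mul_eval (natDegree_prodOneSub_lt c) hsum
  have hb := (hasSum_mgWeight_mul_eval (natDegree_prodOneSub_lt b) hsum).mul_left t
  have hshift := (Equiv.addRight (1 : ℤ)).hasSum_iff.2 hc
  rw [← sub_eq_zero.2 (hshift.unique (hb.congr_fun fun m => ?_)), mul_sum, ← sum_sub_distrib]
  · exact sum_congr rfl fun k _ => by ring
  · have hy : x * q ^ (m + 1) = q * (x * q ^ m) := by rw [zpow_add_one₀ hq0]; ring
    have hne (j : ι) : 1 - b j * (x * q ^ m) ≠ 0 := by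
      rw [← mul_assoc]
      exact one_sub_mul_zpow_ne_zero (hxb j) m
    simp only [Function.comp_apply, Equiv.coe_addRight, eval_prodOneSub, hy, mul_assoc,
      mgWeight_mul_prod hq c hne, zpow_add_one₀ ht0]
    ring

lemma momentTerm_succ (k : ℕ) (m : ℤ) :
    momentTerm q t c b x (k + 1) m = x * momentTerm q (q * t) c b x k m := by
  rw [momentTerm, momentTerm, mul_zpow, pow_succ]
  ring

lemma moment_succ (k : ℕ) : moment q t c b x (k + 1) = x * moment q (q * t) c b x k := by
  simp only [moment, momentTerm_succ, tsum_mul_left]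

end QDifferenceEquation

/-- The determinant of the matrix of moments of order `k < n` over the lattices `x i q^ℤ`. -/
noncomputable def momentDet {n : ℕ} (q t : ℂ) (c b x : Fin n → ℂ) : ℂ :=
  (Matrix.of fun i k : Fin n => moment q t c b (x i) k).det

section MomentDeterminant

open Matrix

variable {n : ℕ} {q t : ℂ} {b c x : Fin n → ℂ}

lemma prod_zpow_eq_zpow_sum {ι G : Type*} [CommGroupWithZero G] (s : Finset ι) {g : G}
    (hg : g ≠ 0) (ν : ι → ℤ) :
    ∏ i ∈ s, g ^ ν i = g ^ ∑ i ∈ s, ν i := by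
  induction s using Finset.cons_induction with
  | empty => simp
  | cons i s hi ih => rw [prod_cons, sum_cons, zpow_add₀ hg, ih]

lemma det_mul_pow {R : Type*} [CommRing R] (w y : Fin n → R) :
    (Matrix.of fun i k : Fin n => w i * y i ^ (k : ℕ)).det =
      (∏ i, w i) * ∏ i, ∏ j ∈ Ioi i, (y j - y i) := by
  rw [← det_vandermonde, ← det_mul_column]
  rfl

lemma hasSum_momentDet (hq0 : q ≠ 0) (hq : ‖q‖ < 1) (ht0 : t ≠ 0) (ht : ‖t‖ < 1)
    (hx : ∀ i, x i ≠ 0) (hxb : ∀ i j, ∀ m : ℤ, b j * x i ≠ q ^ m)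
    (hlow : ‖q‖ * ∏ j, ‖c j‖ < ‖t‖ * ∏ j, ‖b j‖) :
    HasSum (fun ν : Fin n → ℤ => t ^ (∑ i, ν i) * (∏ i, mgWeight q c b (x i * q ^ ν i)) *
      ∏ i, ∏ j ∈ Ioi i, (x j * q ^ ν j - x i * q ^ ν i)) (momentDet q t c b x) := by
  have hsum (i k : Fin n) : Summable fun m => ‖momentTerm q t c b (x i) k m‖ :=
    summable_norm_momentTerm hq0 hq ht0 ht (hx i) (hxb i) hlow (by simp)
  refine (hasSum_det hsum).congr_fun fun ν => ?_
  simp only [momentTerm, det_mul_pow, prod_mul_distrib, prod_zpow_eq_zpow_sum univ ht0]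

lemma one_sub_mul_momentDet (hq0 : q ≠ 0) (hq : ‖q‖ < 1) (ht0 : t ≠ 0)
    (hxb : ∀ i j, ∀ m : ℤ, b j * x i ≠ q ^ m)
    (hsum : ∀ i, ∀ k < n + 1, Summable (momentTerm q t c b (x i) k)) :
    (1 - t) * momentDet q t c b x =
      (∏ j, c j - t * ∏ j, b j) * (∏ i, x i) * momentDet q (q * t) c b x := by
  let A : Matrix (Fin n) (Fin (n + 1)) ℂ := .of fun i k => moment q t c b (x i) k
  let r : Fin (n + 1) → ℂ := fun k => (prodOneSub c).coeff k - t * (prodOneSub b).coeff k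
  have hr : A *ᵥ r = 0 := by
    funext i
    have := sum_coeff_sub_mul_moment_eq_zero hq0 hq ht0 (hxb i)
      (by simpa only [Fintype.card_fin] using hsum i)
    rw [Fintype.card_fin, sum_range] at this
    simpa only [mulVec, dotProduct, A, r, of_apply, mul_comm, Pi.zero_apply] using this
  have hfirst : r 0 = 1 - t := by simp [r, coeff_zero_prodOneSub]
  have hlast : r (Fin.last n) = (-1) ^ n * (∏ j, c j - t * ∏ j, b j) := by
    have hcoeff := coeff_card_prodOneSub (ι := Fin n)
    rw [Fintype.card_fin] at hcoeff
    simp only [r, Fin.val_last, hcoeff]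
    ring
  have hcast : (A.submatrix id Fin.castSucc).det = momentDet q t c b x := rfl
  have hsucc : (A.submatrix id Fin.succ).det = (∏ i, x i) * momentDet q (q * t) c b x := by
    rw [momentDet, ← det_mul_column]
    congr 1
    ext i k
    exact moment_succ k
  have h := last_mul_det_submatrix_succ hr
  rw [hfirst, hlast, hcast, hsucc] at h
  refine mul_left_cancel₀ (pow_ne_zero n (neg_ne_zero.2 one_ne_zero)) ?_
  linear_combination -h

end MomentDeterminant

section TerminatingBelow

open Filter Topology

variable {ι : Type*} [Fintype ι] {q t : ℂ} {b c : ι → ℂ} {x : ℂ} {j : ι}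

lemma momentTerm_eq_zero_of_neg (hq0 : q ≠ 0) (hcx : c j * x = 1) {m : ℤ} (hm : m < 0) (k : ℕ) :
    momentTerm q t c b x k m = 0 := by
  have hnum : qp q (q * c j * (x * q ^ m)) = 0 := by
    refine qp_eq_zero (i := (-(m + 1)).toNat) ?_
    rw [← zpow_natCast, Int.toNat_of_nonneg (by lia), zpow_neg, zpow_add_one₀ hq0]
    have : q ^ m ≠ 0 := zpow_ne_zero m hq0
    field_simp
    linear_combination hcx
  rw [momentTerm, mgWeight, prod_eq_zero (mem_univ j) (by rw [hnum, zero_div]), mul_zero, zero_mul]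

lemma summable_momentTerm_of_mul_eq_one (hq0 : q ≠ 0) (hq : ‖q‖ < 1) (ht0 : t ≠ 0) (ht : ‖t‖ < 1)
    (hxb : ∀ j, ∀ m : ℤ, b j * x ≠ q ^ m) (hcx : c j * x = 1) (k : ℕ) :
    Summable (momentTerm q t c b x k) := by
  refine .of_nat_of_neg ?_ (summable_of_ne_finset_zero (s := {0}) fun m hm => ?_)
  · simpa only [momentTerm_eq_psiTerm] using (summable_psiTerm_nat hq0 hq hq0 hq
      (mul_ne_zero (pow_ne_zero k hq0) ht0) (norm_pow_mul_lt_one hq ht k) hxb).mul_left (x ^ k)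
  · exact momentTerm_eq_zero_of_neg hq0 hcx (by rw [mem_singleton] at hm; lia) k

lemma tendsto_moment_pow_mul (hq0 : q ≠ 0) (hq : ‖q‖ < 1) (ht0 : t ≠ 0) (ht : ‖t‖ < 1)
    (hxb : ∀ j, ∀ m : ℤ, b j * x ≠ q ^ m) (hcx : c j * x = 1) (k : ℕ) :
    Tendsto (fun N : ℕ => moment q (q ^ N * t) c b x k) atTop (𝓝 (mgWeight q c b x * x ^ k)) := by
  have hterm (N : ℕ) (m : ℤ) : momentTerm q (q ^ N * t) c b x k m =
      (q ^ m) ^ N * momentTerm q t c b x k m := by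
    have : (q ^ N) ^ m = (q ^ m) ^ N := by rw [← zpow_natCast, ← zpow_natCast, zpow_comm]
    simp only [momentTerm, mul_zpow, this, mul_assoc]
  have hlim := tendsto_tsum_of_dominated_convergence (𝓕 := atTop)
    (f := fun N : ℕ => momentTerm q (q ^ N * t) c b x k)
    (g := fun m => if m = 0 then momentTerm q t c b x k 0 else 0)
    (summable_momentTerm_of_mul_eq_one hq0 hq ht0 ht hxb hcx k).norm (fun m => ?_)
    (Eventually.of_forall fun N m => ?_)
  · have hzero : momentTerm q t c b x k 0 = mgWeight q c b x * x ^ k := by simp [momentTerm]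
    rwa [tsum_ite_eq, hzero] at hlim
  · rcases lt_trichotomy m 0 with hm | rfl | hm
    · simp [momentTerm_eq_zero_of_neg hq0 hcx hm, hm.ne]
    · simp [hterm]
    · lift m to ℕ using hm.le
      have hm0 : m ≠ 0 := by lia
      have hlt : ‖q ^ m‖ < 1 := by
        rw [norm_pow]
        exact pow_lt_one₀ (norm_nonneg q) hq hm0
      simpa [hterm, hm0] using (tendsto_pow_atTop_nhds_zero_of_norm_lt_one hlt).mul_const
        (momentTerm q t c b x k m)
  · rcases lt_or_ge m 0 with hm | hm
    · simp [momentTerm_eq_zero_of_neg hq0 hcx hm]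
    · lift m to ℕ using hm
      rw [hterm, norm_mul, zpow_natCast, norm_pow, norm_pow]
      exact mul_le_of_le_one_left (norm_nonneg _)
        (pow_le_one₀ (by positivity) (pow_le_one₀ (norm_nonneg q) hq.le))

variable {n : ℕ} {b x : Fin n → ℂ}

lemma tendsto_momentDet_pow_mul (hq0 : q ≠ 0) (hq : ‖q‖ < 1) (ht0 : t ≠ 0) (ht : ‖t‖ < 1)
    (hx : ∀ i, x i ≠ 0) (hxb : ∀ i j, ∀ m : ℤ, b j * x i ≠ q ^ m) :
    Tendsto (fun N : ℕ => momentDet q (q ^ N * t) x⁻¹ b x) atTop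
      (𝓝 ((∏ i, mgWeight q x⁻¹ b (x i)) * ∏ i, ∏ j ∈ Ioi i, (x j - x i))) := by
  have hmat : Tendsto
      (fun N : ℕ => Matrix.of fun i k : Fin n => moment q (q ^ N * t) x⁻¹ b (x i) k) atTop
      (𝓝 (Matrix.of fun i k : Fin n => mgWeight q x⁻¹ b (x i) * x i ^ (k : ℕ))) :=
    tendsto_pi_nhds.2 fun i => tendsto_pi_nhds.2 fun k =>
      tendsto_moment_pow_mul hq0 hq ht0 ht (hxb i) (inv_mul_cancel₀ (hx i)) k
  rw [← det_mul_pow]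
  exact (continuous_id.matrix_det.tendsto _).comp hmat

lemma qp_mul_momentDet_inv (hq0 : q ≠ 0) (hq : ‖q‖ < 1) (ht0 : t ≠ 0)
    (ht : ‖t‖ < 1) (hx : ∀ i, x i ≠ 0) (hxb : ∀ i j, ∀ m : ℤ, b j * x i ≠ q ^ m) :
    qp q t * momentDet q t x⁻¹ b x = qp q (t * (∏ i, x i) * ∏ i, b i) *
      ((∏ i, mgWeight q x⁻¹ b (x i)) * ∏ i, ∏ j ∈ Ioi i, (x j - x i)) := by
  have hcx (i : Fin n) : x⁻¹ i * x i = 1 := inv_mul_cancel₀ (hx i)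
  have hprod : (∏ i, x⁻¹ i) * ∏ i, x i = 1 := by
    rw [← prod_mul_distrib]
    exact prod_eq_one fun i _ => hcx i
  let u : ℕ → ℂ := fun N => qp q (q ^ N * t) * momentDet q (q ^ N * t) x⁻¹ b x
  have hstep (N : ℕ) : u N = (1 - q ^ N * (t * (∏ i, x i) * ∏ i, b i)) * u (N + 1) := by
    have ht0' : q ^ N * t ≠ 0 := mul_ne_zero (pow_ne_zero N hq0) ht0
    have hdiff := one_sub_mul_momentDet hq0 hq ht0' hxb fun i k _ =>
      summable_momentTerm_of_mul_eq_one hq0 hq ht0' (norm_pow_mul_lt_one hq ht N) (hxb i) (hcx i) k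
    simp only [u, qp_eq_one_sub_mul hq (q ^ N * t), pow_succ', mul_assoc q]
    linear_combination qp q (q * (q ^ N * t)) * hdiff +
      qp q (q * (q ^ N * t)) * momentDet q (q * (q ^ N * t)) x⁻¹ b x * hprod
  have hlim := (tendsto_qp_pow_mul hq t).mul (tendsto_momentDet_pow_mul hq0 hq ht0 ht hx hxb)
  rw [one_mul] at hlim
  simpa [u] using eq_qp_mul_of_tendsto hq hstep hlim

end TerminatingBelow

section ClosedForm

variable {n : ℕ} {q t : ℂ} {b c x : Fin n → ℂ}

/-- The product side of the Milne–Gustafson formula without the factor `(1 - q) ^ n`, in terms of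
`c j = (a j)⁻¹`. -/
noncomputable def mgProduct (q t : ℂ) (c b x : Fin n → ℂ) : ℂ :=
  qp q q ^ n * (∏ i, ∏ j, qp q (q * c i * (b j)⁻¹)) /
      (qp q t * qp q (q * t⁻¹ * (∏ i, c i) * (∏ i, b i)⁻¹)) *
    (th q (t * (∏ i, x i) * ∏ i, b i) / ∏ i, ∏ j, th q (x i * b j)) *
    ∏ i, ∏ j ∈ Ioi i, x j * th q (x i / x j)

lemma qp_ne_zero_of_mul_prod_norm_lt (hq : ‖q‖ < 1)
    (hlow : ‖q‖ * ∏ j, ‖c j‖ < ‖t‖ * ∏ j, ‖b j‖) :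
    qp q (q * t⁻¹ * (∏ i, c i) * (∏ i, b i)⁻¹) ≠ 0 := by
  have htb : 0 < ‖t‖ * ∏ j, ‖b j‖ := lt_of_le_of_lt (by positivity) hlow
  refine qp_ne_zero_of_norm_lt_one hq ?_
  calc ‖q * t⁻¹ * (∏ i, c i) * (∏ i, b i)⁻¹‖
      = (‖q‖ * ∏ j, ‖c j‖) / (‖t‖ * ∏ j, ‖b j‖) := by
        simp only [norm_mul, norm_inv, norm_prod]
        ring
    _ < 1 := (div_lt_one htb).2 hlow

lemma prod_mgWeight_inv_mul_vandermonde (hq : ‖q‖ < 1) (hx : ∀ i, x i ≠ 0) :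
    (∏ i, mgWeight q x⁻¹ b (x i)) * ∏ i, ∏ j ∈ Ioi i, (x j - x i) =
      qp q q ^ n / (∏ i, ∏ j, qp q (x i * b j)) * ∏ i, ∏ j ∈ Ioi i, x j * th q (x i / x j) := by
  have hpair (i j : Fin n) : qp q (q * (x i)⁻¹ * x j) * qp q (q * (x j)⁻¹ * x i) * (x j - x i) =
      x j * th q (x i / x j) := by
    have hi := hx i
    have hj := hx j
    rw [th, qp_eq_one_sub_mul hq (x i / x j), show q * (x i / x j) = q * (x j)⁻¹ * x i by ring,
      show q / (x i / x j) = q * (x i)⁻¹ * x j by field_simp]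
    field_simp
  have hnum : ∏ i, ∏ j, qp q (q * (x j)⁻¹ * x i) =
      qp q q ^ n * ∏ i, ∏ j ∈ Ioi i, qp q (q * (x i)⁻¹ * x j) * qp q (q * (x j)⁻¹ * x i) := by
    rw [prod_comm, prod_prod_Ioi_mul_eq_prod_prod_off_diag fun j i => qp q (q * (x i)⁻¹ * x j),
      ← Fin.prod_const, ← prod_mul_distrib]
    refine prod_congr rfl fun i _ => ?_
    rw [Fintype.prod_eq_mul_prod_compl i, inv_mul_cancel_right₀ (hx i)]
  simp only [mgWeight, Pi.inv_apply, prod_div_distrib, hnum, ← hpair, prod_mul_distrib,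
    mul_comm (b _)]
  ring

lemma qp_mul_mgProduct_inv (hq0 : q ≠ 0) (hq : ‖q‖ < 1) (ht : ‖t‖ < 1)
    (hx : ∀ i, x i ≠ 0) (hxb : ∀ i j, ∀ m : ℤ, b j * x i ≠ q ^ m)
    (hlow : ‖q‖ * ∏ j, ‖x⁻¹ j‖ < ‖t‖ * ∏ j, ‖b j‖) :
    qp q t * mgProduct q t x⁻¹ b x = qp q (t * (∏ i, x i) * ∏ i, b i) *
      ((∏ i, mgWeight q x⁻¹ b (x i)) * ∏ i, ∏ j ∈ Ioi i, (x j - x i)) := by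
  have hqp : qp q t ≠ 0 := qp_ne_zero_of_norm_lt_one hq ht
  have hlow' := qp_ne_zero_of_mul_prod_norm_lt hq hlow
  have hth : ∏ i, ∏ j, th q (x i * b j) ≠ 0 := prod_ne_zero_iff.2 fun i _ =>
    prod_ne_zero_iff.2 fun j _ => th_ne_zero hq0 hq (mul_comm (x i) (b j) ▸ hxb i j)
  have hcancel : (∏ i, ∏ j, qp q (q * x⁻¹ i * (b j)⁻¹)) / ∏ i, ∏ j, th q (x i * b j) =
      (∏ i, ∏ j, qp q (x i * b j))⁻¹ := by
    simp only [th, prod_mul_distrib] at hth ⊢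
    simp only [Pi.inv_apply, ← div_eq_mul_inv, div_div]
    rw [div_mul_cancel_right₀ (right_ne_zero_of_mul hth)]
  have hnum : th q (t * (∏ i, x i) * ∏ i, b i) = qp q (t * (∏ i, x i) * ∏ i, b i) *
      qp q (q * t⁻¹ * (∏ i, x⁻¹ i) * (∏ i, b i)⁻¹) := by
    simp only [th, Pi.inv_apply, prod_inv_distrib, div_eq_mul_inv, mul_inv, mul_assoc]
  rw [prod_mgWeight_inv_mul_vandermonde hq hx, div_eq_mul_inv, ← hcancel, mgProduct, hnum]
  generalize qp q (q * t⁻¹ * (∏ i, x⁻¹ i) * (∏ i, b i)⁻¹) = low at hlow' ⊢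
  generalize qp q t = upp at hqp ⊢
  field_simp

lemma momentDet_inv_eq_mgProduct (hq0 : q ≠ 0) (hq : ‖q‖ < 1) (ht0 : t ≠ 0) (ht : ‖t‖ < 1)
    (hx : ∀ i, x i ≠ 0) (hxb : ∀ i j, ∀ m : ℤ, b j * x i ≠ q ^ m)
    (hlow : ‖q‖ * ∏ j, ‖x⁻¹ j‖ < ‖t‖ * ∏ j, ‖b j‖) :
    momentDet q t x⁻¹ b x = mgProduct q t x⁻¹ b x :=
  mul_left_cancel₀ (qp_ne_zero_of_norm_lt_one hq ht) <|
    (qp_mul_momentDet_inv hq0 hq ht0 ht hx hxb).trans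
      (qp_mul_mgProduct_inv hq0 hq ht hx hxb hlow).symm

end ClosedForm

section QuasiPeriodicity

open Function

lemma prod_prod_Ioi_ite {α M : Type*} [CommMonoid M] [LinearOrder α] [Fintype α]
    [LocallyFiniteOrderTop α] [LocallyFiniteOrderBot α] (k : α) (r : α → M) :
    ∏ i, ∏ j ∈ Ioi i, (if i = k then r j else if j = k then r i else 1) = ∏ j ∈ {k}ᶜ, r j := by
  have hne : ∀ i ∈ ({k}ᶜ : Finset α),
      ∏ j ∈ Ioi i, (if i = k then r j else if j = k then r i else 1) =
        if i < k then r i else 1 := fun i hi => by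
    simp only [mem_compl, mem_singleton] at hi
    simp only [if_neg hi, prod_ite_eq', mem_Ioi]
  have hlt : ({k}ᶜ : Finset α).filter (· < k) = Iio k := by
    ext i
    simpa using ne_of_lt
  rw [Fintype.prod_eq_mul_prod_compl k, prod_congr rfl hne, ← prod_filter, hlt,
    ← Ioi_disjUnion_Iio k, prod_disjUnion]
  simp only [if_true]

lemma prod_update_mul {ι M : Type*} [CommMonoid M] [Fintype ι] [DecidableEq ι] (x : ι → M)
    (k : ι) (s : M) : ∏ i, update x k (s * x k) i = s * ∏ i, x i := by
  rw [prod_update_of_mem (mem_univ k), mul_assoc,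
    ← prod_eq_mul_prod_sdiff_singleton_of_mem (mem_univ k)]

variable {n : ℕ} {q t : ℂ} {b c x : Fin n → ℂ}

lemma prod_Ioi_mul_th_update (hq0 : q ≠ 0) (hq : ‖q‖ < 1) (hx : ∀ i, x i ≠ 0) (k : Fin n) :
    ∏ i, ∏ j ∈ Ioi i, update x k (q * x k) j *
        th q (update x k (q * x k) i / update x k (q * x k) j) =
      (-∏ j, -(x j / x k)) * ∏ i, ∏ j ∈ Ioi i, x j * th q (x i / x j) := by
  have hk := hx k
  have hpair (i : Fin n) : ∀ j ∈ Ioi i, update x k (q * x k) j *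
      th q (update x k (q * x k) i / update x k (q * x k) j) =
        (if i = k then -(x j / x k) else if j = k then -(x i / x k) else 1) *
          (x j * th q (x i / x j)) := fun j hj => by
    have hij : i ≠ j := (mem_Ioi.1 hj).ne
    have hi := hx i
    have hxj := hx j
    split_ifs with hik hjk
    · subst i
      rw [update_self, update_of_ne hij.symm, mul_div_assoc, th_mul_q hq0 hq (div_ne_zero hk hxj)]
      field_simp
    · subst j
      have hth := th_mul_q hq0 hq (div_ne_zero hi (mul_ne_zero hq0 hk))
      rw [show q * (x i / (q * x k)) = x i / x k by field_simp] at hth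
      rw [update_self, update_of_ne hik, hth]
      field_simp
    · rw [update_of_ne hik, update_of_ne hjk, one_mul]
  rw [Fintype.prod_eq_mul_prod_compl k fun j => -(x j / x k), div_self hk, neg_one_mul, neg_neg,
    ← prod_prod_Ioi_ite k]
  simp only [prod_congr rfl (hpair _), prod_mul_distrib]

lemma prod_th_mul_update (hq0 : q ≠ 0) (hq : ‖q‖ < 1) (hb : ∀ j, b j ≠ 0) (hx : ∀ i, x i ≠ 0)
    (k : Fin n) :
    ∏ i, ∏ j, th q (update x k (q * x k) i * b j) =
      (∏ j, -(x k * b j)⁻¹) * ∏ i, ∏ j, th q (x i * b j) := by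
  have hrow : ∏ j, th q (q * x k * b j) = (∏ j, -(x k * b j)⁻¹) * ∏ j, th q (x k * b j) := by
    rw [← prod_mul_distrib]
    exact prod_congr rfl fun j _ => by
      rw [mul_assoc, th_mul_q hq0 hq (mul_ne_zero (hx k) (hb j))]
  rw [Fintype.prod_eq_mul_prod_compl k,
    Fintype.prod_eq_mul_prod_compl k fun i => ∏ j, th q (x i * b j), update_self, hrow, mul_assoc]
  congr 2
  exact prod_congr rfl fun i hi => by rw [update_of_ne (by simpa using hi)]

lemma mgProduct_update (hq0 : q ≠ 0) (hq : ‖q‖ < 1) (ht0 : t ≠ 0) (hb : ∀ j, b j ≠ 0)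
    (hx : ∀ i, x i ≠ 0) (k : Fin n) :
    mgProduct q t c b (update x k (q * x k)) = t⁻¹ * mgProduct q t c b x := by
  have hX : ∏ i, x i ≠ 0 := prod_ne_zero_iff.2 fun i _ => hx i
  have hB : ∏ i, b i ≠ 0 := prod_ne_zero_iff.2 fun i _ => hb i
  have hk := hx k
  have hnum : th q (t * (∏ i, update x k (q * x k) i) * ∏ i, b i) =
      -(t * (∏ i, x i) * ∏ i, b i)⁻¹ * th q (t * (∏ i, x i) * ∏ i, b i) := by
    rw [prod_update_mul, ← th_mul_q hq0 hq (by simp [*])]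
    ring_nf
  have hfactor : (-∏ j, -(x j / x k)) * (∏ j, -(x k * b j)⁻¹)⁻¹ =
      -((∏ i, x i) * ∏ i, b i) := by
    rw [neg_mul, ← prod_inv_distrib, ← prod_mul_distrib, ← prod_mul_distrib]
    congr 1
    exact prod_congr rfl fun j _ => by field_simp
  rw [mgProduct, mgProduct, hnum, prod_th_mul_update hq0 hq hb hx, prod_Ioi_mul_th_update hq0 hq hx]
  generalize ∏ i, ∏ j ∈ Ioi i, x j * th q (x i / x j) = P
  generalize ∏ i, ∏ j, th q (x i * b j) = D
  calc _ = qp q q ^ n * (∏ i, ∏ j, qp q (q * c i * (b j)⁻¹)) /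
          (qp q t * qp q (q * t⁻¹ * (∏ i, c i) * (∏ i, b i)⁻¹)) *
        (th q (t * (∏ i, x i) * ∏ i, b i) / D) * P *
        (-(t * (∏ i, x i) * ∏ i, b i)⁻¹ *
          ((-∏ j, -(x j / x k)) * (∏ j, -(x k * b j)⁻¹)⁻¹)) := by ring
    _ = _ := by
      rw [hfactor, mul_comm t⁻¹]
      congr 1
      field_simp

lemma moment_mul_q (hq0 : q ≠ 0) (ht0 : t ≠ 0) {ι : Type*} [Fintype ι] (c b : ι → ℂ) (y : ℂ)
    (k : ℕ) : moment q t c b (q * y) k = t⁻¹ * moment q t c b y k := by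
  rw [moment, moment, ← tsum_mul_left, ← (Equiv.addRight (1 : ℤ)).tsum_eq fun m => t⁻¹ * _]
  refine tsum_congr fun m => ?_
  rw [Equiv.coe_addRight, momentTerm, momentTerm, zpow_add_one₀ ht0, zpow_add_one₀ hq0,
    show q * y * q ^ m = y * (q ^ m * q) by ring]
  field_simp

lemma momentDet_update (hq0 : q ≠ 0) (ht0 : t ≠ 0) (k : Fin n) :
    momentDet q t c b (update x k (q * x k)) = t⁻¹ * momentDet q t c b x := by
  have hrow : (Matrix.of fun i l : Fin n => moment q t c b (update x k (q * x k) i) l) =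
      (Matrix.of fun i l : Fin n => moment q t c b (x i) l).updateRow k
        (t⁻¹ • (Matrix.of fun i l : Fin n => moment q t c b (x i) l) k) := by
    ext i l
    rcases eq_or_ne i k with rfl | hik
    · simp [moment_mul_q hq0 ht0]
    · simp [hik]
  rw [momentDet, hrow, Matrix.det_updateRow_smul, Matrix.updateRow_eq_self, momentDet]

lemma forall_pow_mul_of_forall_update {ι R : Type*} [Finite ι] [DecidableEq ι] [CommMonoid R]
    {q : R} {P : (ι → R) → Prop} (hP : ∀ x k, P x → P (update x k (q * x k))) (m : ι → ℕ)
    {x : ι → R} (hx : P x) : P fun i => q ^ m i * x i := by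
  cases nonempty_fintype ι
  let S : AddSubmonoid (ι → ℕ) :=
    { carrier := {m | ∀ x, P x → P fun i => q ^ m i * x i}
      zero_mem' := fun x hx => by simpa using hx
      add_mem' := fun {m₁ m₂} h₁ h₂ x hx => by
        simpa only [Pi.add_apply, pow_add, mul_assoc] using h₁ _ (h₂ x hx) }
  have hsingle (k : ι) : Pi.single k 1 ∈ S := fun x hx => by
    convert hP x k hx using 1
    ext i
    rcases eq_or_ne i k with rfl | hik
    · simp
    · simp [hik]
  have hm : m ∈ S := by
    rw [← univ_sum_single m]
    refine sum_mem fun k _ => ?_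
    simpa [← Pi.single_smul] using nsmul_mem (hsingle k) (m k)
  exact hm x hx

lemma momentDet_eq_mgProduct_of_lattice (hq0 : q ≠ 0) (hq : ‖q‖ < 1) (ht0 : t ≠ 0) (ht : ‖t‖ < 1)
    (hb : ∀ j, b j ≠ 0) (hx : ∀ i, x i ≠ 0) (hxb : ∀ i j, ∀ m : ℤ, b j * x i ≠ q ^ m)
    (hlow : ‖q‖ * ∏ j, ‖c j‖ < ‖t‖ * ∏ j, ‖b j‖)
    (hc : ∀ j, ∃ m : ℕ, q ^ m * (x j)⁻¹ = c j) :
    momentDet q t c b x = mgProduct q t c b x := by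
  choose m hm using hc
  let y : Fin n → ℂ := fun i => (q ^ m i)⁻¹ * x i
  have hqm (i : Fin n) : q ^ m i ≠ 0 := pow_ne_zero _ hq0
  have hy (i : Fin n) : y i ≠ 0 := mul_ne_zero (inv_ne_zero (hqm i)) (hx i)
  have hcy : c = y⁻¹ := by
    ext j
    simp [y, ← hm j, mul_comm]
  have hyb (i j : Fin n) (k : ℤ) : b j * y i ≠ q ^ k := fun h => hxb i j (k + m i) <| by
    rw [zpow_add₀ hq0, zpow_natCast, ← h]
    have := hqm i
    simp only [y]
    field_simp
  have hshift : (∀ i, q ^ m i * y i ≠ 0) ∧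
      momentDet q t c b (fun i => q ^ m i * y i) = mgProduct q t c b fun i => q ^ m i * y i := by
    refine forall_pow_mul_of_forall_update
      (P := fun z => (∀ i, z i ≠ 0) ∧ momentDet q t c b z = mgProduct q t c b z)
      (fun z k hz => ⟨?_, ?_⟩) m ⟨hy, ?_⟩
    · exact forall_update_iff z (fun _ w => w ≠ 0) |>.2
        ⟨mul_ne_zero hq0 (hz.1 k), fun i _ => hz.1 i⟩
    · rw [momentDet_update hq0 ht0, hz.2, mgProduct_update hq0 hq ht0 hb hz.1]
    · subst hcy
      exact momentDet_inv_eq_mgProduct hq0 hq ht0 ht hy hyb hlow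
  simpa only [y, mul_inv_cancel_left₀ (hqm _)] using hshift.2

end QuasiPeriodicity

section AnalyticContinuation

open Filter Function Topology

lemma eqOn_of_differentiableAt_of_frequently_eq {s : Set ℂ} (hs : IsOpen s)
    (hstar : StarConvex ℝ 0 s) (h0 : (0 : ℂ) ∈ s) {f g : ℂ → ℂ}
    (hf : ∀ z ∈ s, DifferentiableAt ℂ f z) (hg : ∀ z ∈ s, DifferentiableAt ℂ g z)
    (hfg : ∃ᶠ z in 𝓝[≠] 0, f z = g z) : Set.EqOn f g s := by
  have han {h : ℂ → ℂ} (hh : ∀ z ∈ s, DifferentiableAt ℂ h z) : AnalyticOnNhd ℂ h s :=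
    DifferentiableOn.analyticOnNhd (fun z hz => (hh z hz).differentiableWithinAt) hs
  exact (han hf).eqOn_of_preconnected_of_frequently_eq (han hg)
    (hstar.isPathConnected h0).isConnected.isPreconnected h0 hfg

variable {ι : Type*} [Finite ι] [DecidableEq ι]

lemma eqOn_of_completeReinhardt_of_frequently_mem {D : Set (ι → ℂ)} (hopen : IsOpen D)
    (hreinhardt : ∀ c ∈ D, ∀ c' : ι → ℂ, (∀ j, ‖c' j‖ ≤ ‖c j‖) → c' ∈ D)
    {f g : (ι → ℂ) → ℂ}
    (hf : ∀ c ∈ D, ∀ k, DifferentiableAt ℂ (fun z => f (update c k z)) (c k))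
    (hg : ∀ c ∈ D, ∀ k, DifferentiableAt ℂ (fun z => g (update c k z)) (c k))
    {A : ι → Set ℂ} (hA : ∀ j, ∃ᶠ z in 𝓝[≠] 0, z ∈ A j)
    (hfg : ∀ c ∈ D, (∀ j, c j ∈ A j) → f c = g c) : Set.EqOn f g D := by
  cases nonempty_fintype ι
  suffices h : ∀ s : Finset ι, ∀ c ∈ D, (∀ j ∉ s, c j ∈ A j) → f c = g c from
    fun c hc => h univ c hc (by simp)
  intro s
  induction s using Finset.induction_on with
  | empty => simpa using hfg
  | insert k s hk ih =>
    intro c hc hcA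
    let S : Set ℂ := {z | update c k z ∈ D}
    have hSopen : IsOpen S := hopen.preimage (by fun_prop)
    have hshrink {z w : ℂ} (hz : z ∈ S) (hw : ‖w‖ ≤ ‖z‖) : w ∈ S :=
      hreinhardt _ hz _ fun j => by
        rcases eq_or_ne j k with rfl | hjk
        · simpa using hw
        · simp [hjk]
    have hS0 : (0 : ℂ) ∈ S := hshrink (z := c k) (by simpa [S] using hc) (by simp)
    have hstar : StarConvex ℝ 0 S := starConvex_zero_iff.2 fun z hz a ha ha1 =>
      hshrink hz <| by
        rw [norm_smul, Real.norm_of_nonneg ha]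
        exact mul_le_of_le_one_left (norm_nonneg z) ha1
    have hdiff {h : (ι → ℂ) → ℂ}
        (hh : ∀ c ∈ D, ∀ k, DifferentiableAt ℂ (fun z => h (update c k z)) (c k)) :
        ∀ z ∈ S, DifferentiableAt ℂ (fun z => h (update c k z)) z := fun z hz => by
      simpa using hh _ hz k
    have hfreq : ∃ᶠ z in 𝓝[≠] 0, f (update c k z) = g (update c k z) := by
      refine ((hA k).and_eventually (nhdsWithin_le_nhds (hSopen.mem_nhds hS0))).mono
        fun z hz => ih _ hz.2 fun j hj => ?_
      rcases eq_or_ne j k with rfl | hjk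
      · simpa using hz.1
      · simpa [hjk] using hcA j (by simp [hjk, hj])
    simpa using eqOn_of_differentiableAt_of_frequently_eq hSopen hstar hS0 (hdiff hf) (hdiff hg)
      hfreq (show c k ∈ S by simpa [S] using hc)

lemma frequently_mem_range_pow_mul {q z : ℂ} (hq0 : q ≠ 0) (hq : ‖q‖ < 1) (hz : z ≠ 0) :
    ∃ᶠ w in 𝓝[≠] 0, w ∈ Set.range fun m : ℕ => q ^ m * z := by
  have htend : Tendsto (fun m : ℕ => q ^ m * z) atTop (𝓝[≠] 0) := by
    refine tendsto_nhdsWithin_iff.2 ⟨?_, .of_forall fun m => mul_ne_zero (pow_ne_zero m hq0) hz⟩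
    simpa using (tendsto_pow_atTop_nhds_zero_of_norm_lt_one hq).mul_const z
  exact htend.frequently (Frequently.of_forall fun m => ⟨m, rfl⟩)

variable {n : ℕ} {q t : ℂ} {b c x : Fin n → ℂ}

lemma differentiableAt_momentDet_update (hq0 : q ≠ 0) (hq : ‖q‖ < 1) (ht0 : t ≠ 0) (ht : ‖t‖ < 1)
    (hx : ∀ i, x i ≠ 0) (hxb : ∀ i j, ∀ m : ℤ, b j * x i ≠ q ^ m)
    (hlow : ‖q‖ * ∏ j, ‖c j‖ < ‖t‖ * ∏ j, ‖b j‖) (k : Fin n) :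
    DifferentiableAt ℂ (fun z => momentDet q t (update c k z) b x) (c k) := by
  simp only [momentDet, Matrix.det_apply, Matrix.of_apply]
  refine .fun_sum fun σ _ => .const_smul (.fun_finsetProd fun i _ => ?_) _
  exact differentiableAt_moment_update hq0 hq ht0 ht (hx _) (hxb _) hlow (by simp) k

lemma differentiableAt_mgProduct_update (hq : ‖q‖ < 1) (ht : ‖t‖ < 1)
    (hlow : ‖q‖ * ∏ j, ‖c j‖ < ‖t‖ * ∏ j, ‖b j‖) (k : Fin n) :
    DifferentiableAt ℂ (fun z => mgProduct q t (update c k z) b x) (c k) := by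
  have hqp : Differentiable ℂ (qp q) := differentiable_qp hq
  have hcoord (i : Fin n) : Differentiable ℂ fun z => update c k z i :=
    differentiable_update_apply c k i
  have hprod : Differentiable ℂ fun z => ∏ i, update c k z i := .fun_finsetProd fun i _ => hcoord i
  have hnum : Differentiable ℂ fun z => ∏ i, ∏ j, qp q (q * update c k z i * (b j)⁻¹) :=
    .fun_finsetProd fun i _ => .fun_finsetProd fun j _ =>
      hqp.comp (((hcoord i).const_mul q).mul_const _)
  have hlow' : Differentiable ℂ fun z => qp q (q * t⁻¹ * (∏ i, update c k z i) * (∏ i, b i)⁻¹) :=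
    hqp.comp ((hprod.const_mul _).mul_const _)
  unfold mgProduct
  refine (((hnum.const_mul _).differentiableAt.div (hlow'.const_mul _).differentiableAt
    (mul_ne_zero (qp_ne_zero_of_norm_lt_one hq ht) ?_)).mul_const _).mul_const _
  simpa using qp_ne_zero_of_mul_prod_norm_lt hq hlow

lemma momentDet_eq_mgProduct (hq0 : q ≠ 0) (hq : ‖q‖ < 1) (ht0 : t ≠ 0) (ht : ‖t‖ < 1)
    (hb : ∀ j, b j ≠ 0) (hx : ∀ i, x i ≠ 0) (hxb : ∀ i j, ∀ m : ℤ, b j * x i ≠ q ^ m)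
    (hlow : ‖q‖ * ∏ j, ‖c j‖ < ‖t‖ * ∏ j, ‖b j‖) :
    momentDet q t c b x = mgProduct q t c b x := by
  have hopen : IsOpen {c : Fin n → ℂ | ‖q‖ * ∏ j, ‖c j‖ < ‖t‖ * ∏ j, ‖b j‖} :=
    isOpen_lt (by fun_prop) continuous_const
  refine eqOn_of_completeReinhardt_of_frequently_mem hopen (fun c hc c' hc' => ?_)
    (fun c hc => differentiableAt_momentDet_update hq0 hq ht0 ht hx hxb hc)
    (fun c hc => differentiableAt_mgProduct_update hq ht hc)
    (fun j => frequently_mem_range_pow_mul hq0 hq (inv_ne_zero (hx j)))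
    (fun c hc => momentDet_eq_mgProduct_of_lattice hq0 hq ht0 ht hb hx hxb hc) hlow
  refine lt_of_le_of_lt (b := ‖q‖ * ∏ j, ‖c j‖) ?_ hc
  gcongr with j
  exact hc' j

end AnalyticContinuation

theorem milne_gustafson_summation_general {n : ℕ} {q t : ℂ} {b c x : Fin n → ℂ} (hq0 : q ≠ 0)
    (hq : ‖q‖ < 1) (ht0 : t ≠ 0) (ht : ‖t‖ < 1) (hb : ∀ j, b j ≠ 0) (hx : ∀ i, x i ≠ 0)
    (hxb : ∀ i j, ∀ m : ℤ, x i * b j ≠ q ^ m)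
    (hlow : ‖q * (∏ i, c i) * (∏ i, b i)⁻¹‖ < ‖t‖) :
    HasSum (fun ν : Fin n → ℤ => t ^ (∑ i, ν i) * (∏ i, mgWeight q c b (x i * q ^ ν i)) *
      ∏ i, ∏ j ∈ Ioi i, (x j * q ^ ν j - x i * q ^ ν i)) (mgProduct q t c b x) := by
  have hB : 0 < ∏ j, ‖b j‖ := prod_pos fun j _ => norm_pos_iff.2 (hb j)
  have hlow' : ‖q‖ * ∏ j, ‖c j‖ < ‖t‖ * ∏ j, ‖b j‖ := by
    simpa [← div_eq_mul_inv, div_lt_iff₀ hB] using hlow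
  have hbx : ∀ i j, ∀ m : ℤ, b j * x i ≠ q ^ m := fun i j => mul_comm (x i) (b j) ▸ hxb i j
  rw [← momentDet_eq_mgProduct hq0 hq ht0 ht hb hx hbx hlow']
  exact hasSum_momentDet hq0 hq ht0 ht hx hbx hlow'

/-- Milne–Gustafson summation formula. -/
theorem milne_gustafson_summation
    (q : ℝ) (hq0 : 0 < q) (hq1 : q < 1) (n : ℕ) (hn : 1 ≤ n)
    (a b : Fin n → ℂ) (ha : ∀ i, a i ≠ 0) (hb : ∀ i, b i ≠ 0)
    (t : ℂ) (ht0 : t ≠ 0)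
    (x : Fin n → ℂ) (hx : ∀ i, x i ≠ 0)
    (hlow : ‖(q : ℂ) * (∏ i, a i)⁻¹ * (∏ i, b i)⁻¹‖ < ‖t‖) (hupp : ‖t‖ < 1)
    (hxb : ∀ i j, ∀ m : ℤ, x i * b j ≠ (q : ℂ) ^ m) :
    Summable (mgTerm (q : ℂ) t a b x) ∧
      mgSum (q : ℂ) t a b x =
        (1 - (q : ℂ)) ^ n * qp (q : ℂ) (q : ℂ) ^ n *
            (∏ i, ∏ j, qp (q : ℂ) ((q : ℂ) * (a i)⁻¹ * (b j)⁻¹)) /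
            (qp (q : ℂ) t *
              qp (q : ℂ) ((q : ℂ) * t⁻¹ * (∏ i, a i)⁻¹ * (∏ i, b i)⁻¹)) *
          (th (q : ℂ) (t * (∏ i, x i) * ∏ i, b i) /
            ∏ i, ∏ j, th (q : ℂ) (x i * b j)) *
          ∏ i, ∏ j ∈ Finset.Ioi i, x j * th (q : ℂ) (x i / x j) := by
  have h : HasSum (mgTerm (q : ℂ) t a b x) (mgProduct q t a⁻¹ b x) :=
    milne_gustafson_summation_general (Complex.ofReal_ne_zero.2 hq0.ne')
      (by rwa [Complex.norm_real, Real.norm_of_nonneg hq0.le]) ht0 hupp hb hx hxb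
      (by simpa only [Pi.inv_apply, prod_inv_distrib] using hlow)
  refine ⟨h.summable, ?_⟩
  simp only [mgSum, h.tsum_eq, mgProduct, Pi.inv_apply, prod_inv_distrib, mul_assoc, mul_div_assoc]
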